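/- arXiv:2110.13371 — 3 statements merged into one kernel-verified Lean document; each statement's English description precedes it below -/
import Mathlib

section
/- Let A and B be m×m positive definite complex matrices. Then X = A^{1/2}(A^{-1/2}BA^{-1/2})^{1/2}A^{1/2} is the unique positive definite matrix X satisfying the Riccati equation X A^{-1} X = B. -/
/-!
Write `S = A^{1/2}`. The congruence `X = S Y S` carries the Riccati equation `X A⁻¹ X = B` to
`Y² = S⁻¹ B S⁻¹`, because `A⁻¹ = S⁻¹ S⁻¹`, and it preserves positive definiteness in both
directions. A positive definite matrix has exactly one positive definite square root, so
`Y = (S⁻¹ B S⁻¹)^{1/2}`, that is, `X = A # B`. The facts on square roots are `msqrt_posDef`,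
`msqrt_mul_self` and `eq_msqrt_of_mul_self`.
-/

open Matrix
open scoped ComplexOrder

noncomputable def matFun {m : ℕ} (f : ℝ → ℝ) (A : Matrix (Fin m) (Fin m) ℂ) :
    Matrix (Fin m) (Fin m) ℂ :=
  if hA : A.IsHermitian then
    (hA.eigenvectorUnitary : Matrix (Fin m) (Fin m) ℂ) *
      Matrix.diagonal (fun i => (f (hA.eigenvalues i) : ℂ)) *
      (star (hA.eigenvectorUnitary : Matrix (Fin m) (Fin m) ℂ))
  else 0

/-- The unique positive definite square root of a positive definite matrix
(realized via the spectral decomposition). -/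
noncomputable def msqrt {m : ℕ} (A : Matrix (Fin m) (Fin m) ℂ) : Matrix (Fin m) (Fin m) ℂ :=
  matFun Real.sqrt A

/-- The logarithm of a positive definite matrix: the unique Hermitian `L` with `exp L = A`. -/
noncomputable def mlog {m : ℕ} (A : Matrix (Fin m) (Fin m) ℂ) : Matrix (Fin m) (Fin m) ℂ :=
  matFun Real.log A

/-- The real power `A ^ t` of a positive definite matrix, via the spectral decomposition. -/
noncomputable def mpow {m : ℕ} (A : Matrix (Fin m) (Fin m) ℂ) (t : ℝ) : Matrix (Fin m) (Fin m) ℂ :=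
  matFun (fun x => x ^ t) A

/-- The matrix geometric mean `A # B`. -/
noncomputable def gmean {m : ℕ} (A B : Matrix (Fin m) (Fin m) ℂ) : Matrix (Fin m) (Fin m) ℂ :=
  msqrt A * msqrt ((msqrt A)⁻¹ * B * (msqrt A)⁻¹) * msqrt A

/-- The weighted geometric mean `A #_t B`. -/
noncomputable def wgmean {m : ℕ} (A B : Matrix (Fin m) (Fin m) ℂ) (t : ℝ) :
    Matrix (Fin m) (Fin m) ℂ :=
  msqrt A * mpow ((msqrt A)⁻¹ * B * (msqrt A)⁻¹) t * msqrt A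

/-- The Frobenius (Hilbert–Schmidt) norm `‖X‖₂ = (Tr(X*X))^{1/2}`. -/
noncomputable def fnorm {m : ℕ} (X : Matrix (Fin m) (Fin m) ℂ) : ℝ :=
  Real.sqrt ((Xᴴ * X).trace.re)

/-- The Riemannian metric `δ(A,B) = ‖log(A^{-1/2} B A^{-1/2})‖₂`. -/
noncomputable def rdist {m : ℕ} (A B : Matrix (Fin m) (Fin m) ℂ) : ℝ :=
  fnorm (mlog ((msqrt A)⁻¹ * B * (msqrt A)⁻¹))

/-- The Loewner order: `A ≤ B` iff `B - A` is positive semidefinite. -/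
def Loewner {m : ℕ} (A B : Matrix (Fin m) (Fin m) ℂ) : Prop :=
  (B - A).PosSemidef

theorem posDef_congr_isHermitian {m : ℕ} {P S : Matrix (Fin m) (Fin m) ℂ}
    (hP : P.PosDef) (hS : S.IsHermitian) (hu : IsUnit S) : (S * P * S).PosDef := by
  have h := hP.conjTranspose_mul_mul_same (B := S) (mulVec_injective_of_isUnit hu)
  rwa [hS.eq] at h

theorem msqrt_posDef {m : ℕ} {A : Matrix (Fin m) (Fin m) ℂ} (hA : A.PosDef) :
    (msqrt A).PosDef := by
  have hD : (Matrix.diagonal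
      (fun i => ((Real.sqrt (hA.isHermitian.eigenvalues i) : ℝ) : ℂ))).PosDef :=
    PosDef.diagonal fun i => by
      have := Real.sqrt_pos.2 (hA.eigenvalues_pos i)
      exact_mod_cast this
  have hU : IsUnit (star (hA.isHermitian.eigenvectorUnitary : Matrix (Fin m) (Fin m) ℂ)) :=
    (Unitary.toUnits (star hA.isHermitian.eigenvectorUnitary)).isUnit
  have h := hD.conjTranspose_mul_mul_same (mulVec_injective_of_isUnit hU)
  rw [msqrt, matFun, dif_pos hA.isHermitian]
  rwa [← star_eq_conjTranspose, star_star] at h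

theorem msqrt_mul_self {m : ℕ} {A : Matrix (Fin m) (Fin m) ℂ} (hA : A.PosDef) :
    msqrt A * msqrt A = A := by
  rw [msqrt, matFun, dif_pos hA.isHermitian]
  have hU : star (hA.isHermitian.eigenvectorUnitary : Matrix (Fin m) (Fin m) ℂ) *
      (hA.isHermitian.eigenvectorUnitary : Matrix (Fin m) (Fin m) ℂ) = 1 :=
    Unitary.coe_star_mul_self _
  have hD : Matrix.diagonal (fun i => ((Real.sqrt (hA.isHermitian.eigenvalues i) : ℝ) : ℂ)) *
      Matrix.diagonal (fun i => ((Real.sqrt (hA.isHermitian.eigenvalues i) : ℝ) : ℂ)) =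
      Matrix.diagonal (fun i => (hA.isHermitian.eigenvalues i : ℂ)) := by
    rw [diagonal_mul_diagonal]
    congr 1
    funext i
    exact_mod_cast Real.mul_self_sqrt (hA.eigenvalues_pos i).le
  have hs : A = (hA.isHermitian.eigenvectorUnitary : Matrix (Fin m) (Fin m) ℂ) *
      Matrix.diagonal (fun i => (hA.isHermitian.eigenvalues i : ℂ)) *
      star (hA.isHermitian.eigenvectorUnitary : Matrix (Fin m) (Fin m) ℂ) :=
    hA.isHermitian.spectral_theorem
  generalize (hA.isHermitian.eigenvectorUnitary : Matrix (Fin m) (Fin m) ℂ) = U at *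
  generalize Matrix.diagonal
    (fun i => ((Real.sqrt (hA.isHermitian.eigenvalues i) : ℝ) : ℂ)) = D at *
  calc U * D * star U * (U * D * star U) = U * D * (star U * U) * D * star U := by
        simp only [mul_assoc]
    _ = U * (D * D) * star U := by rw [hU]; simp only [mul_assoc, one_mul]
    _ = A := by rw [hD, ← hs]

/-- Uniqueness of the positive definite square root, obtained by comparing both roots with the
square root of the continuous functional calculus. -/
theorem eq_msqrt_of_mul_self {m : ℕ} {A Y : Matrix (Fin m) (Fin m) ℂ} (hA : A.PosDef)
    (hY : Y.PosDef) (h : Y * Y = A) : Y = msqrt A := by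
  open scoped MatrixOrder Matrix.Norms.L2Operator in
  exact (CFC.sqrt_unique h (nonneg_iff_posSemidef.2 hY.posSemidef)).symm.trans
    (CFC.sqrt_unique (msqrt_mul_self hA)
      (nonneg_iff_posSemidef.2 (msqrt_posDef hA).posSemidef))

/-- The geometric mean `A # B = A^{1/2}(A^{-1/2}BA^{-1/2})^{1/2}A^{1/2}` is the unique
positive definite solution `X` of the Riccati equation `X A⁻¹ X = B`. -/
theorem gmean_riccati_unique {m : ℕ} (A B : Matrix (Fin m) (Fin m) ℂ)
    (hA : A.PosDef) (hB : B.PosDef) :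
    (gmean A B).PosDef ∧ gmean A B * A⁻¹ * gmean A B = B ∧
      ∀ X : Matrix (Fin m) (Fin m) ℂ, X.PosDef → X * A⁻¹ * X = B → X = gmean A B := by
  have hS := msqrt_posDef hA
  have hSS := msqrt_mul_self hA
  unfold gmean
  generalize msqrt A = S at *
  have hu : IsUnit S.det := (isUnit_iff_isUnit_det S).1 hS.isUnit
  have hC : (S⁻¹ * B * S⁻¹).PosDef :=
    posDef_congr_isHermitian hB hS.inv.isHermitian hS.inv.isUnit
  have hT := msqrt_posDef hC
  have hTT := msqrt_mul_self hC
  have hAi : A⁻¹ = S⁻¹ * S⁻¹ := by rw [← hSS, Matrix.mul_inv_rev]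
  have h1 : S * S⁻¹ = 1 := mul_nonsing_inv S hu
  have h2 : S⁻¹ * S = 1 := nonsing_inv_mul S hu
  refine ⟨posDef_congr_isHermitian hT hS.isHermitian hS.isUnit, ?_, fun X hX hXB => ?_⟩
  · generalize msqrt (S⁻¹ * B * S⁻¹) = T at *
    calc S * T * S * A⁻¹ * (S * T * S) = S * T * (S * S⁻¹) * (S⁻¹ * S) * T * S := by
          rw [hAi]; simp only [mul_assoc]
      _ = S * (T * T) * S := by rw [h1, h2]; simp only [mul_assoc, one_mul]
      _ = (S * S⁻¹) * B * (S⁻¹ * S) := by rw [hTT]; simp only [mul_assoc]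
      _ = B := by rw [h1, h2, one_mul, mul_one]
  · have hY : (S⁻¹ * X * S⁻¹).PosDef :=
      posDef_congr_isHermitian hX hS.inv.isHermitian hS.inv.isUnit
    rw [← eq_msqrt_of_mul_self hC hY (by rw [← hXB, hAi]; simp only [mul_assoc])]
    calc X = (S * S⁻¹) * X * (S⁻¹ * S) := by rw [h1, h2, one_mul, mul_one]
      _ = S * (S⁻¹ * X * S⁻¹) * S := by simp only [mul_assoc]
end

section
/- (Semiparallelogram law) For all m×m positive definite complex matrices A, B, C, writing M = A # B, one has δ²(A,B) + 4δ²(C,M) ≤ 2δ²(C,A) + 2δ²(C,B). -/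
/-!
The quantity `δ²(A, B)` depends only on the spectrum of `A⁻¹ B`, so `δ` is invariant under
congruences `A ↦ T A T*` (`rdist_sq_congr`). A suitable congruence turns `A # B` into `1`, and then
`A = exp (-K)` and `B = exp K` for a Hermitian `K`. With `C = exp L` one has `δ(A, B) = 2‖K‖₂` and
`δ(C, 1) = ‖L‖₂`, so the law follows from the parallelogram identity for `‖·‖₂` applied to `L ± K`,
once the exponential metric increasing property `‖log A - log B‖₂ ≤ δ(A, B)` is known
(`fnorm_mlog_sub_sq_le_rdist_sq`).

That property is obtained without differentiating the logarithm. Let `A = exp H`, `B = exp K`, with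
orthonormal eigenbases `uᵢ`, `vⱼ` and eigenvalues `hᵢ`, `kⱼ` of `H`, `K`. Then
`‖H - K‖₂² = ∑ |⟨uᵢ, vⱼ⟩|² (hᵢ - kⱼ)²`, while
`tr(A⁻¹B + B⁻¹A - 2) = ∑ |⟨uᵢ, vⱼ⟩|² 4 sinh²((hᵢ - kⱼ)/2)`, so the former is at most the latter
(`fnorm_mlog_sub_sq_le_trace`). Along the geodesic `γ(t) = A^{1/2} exp(tX) A^{1/2}` from `A` to `B`
the product `γ(s)⁻¹ γ(t)` is similar to `exp((t - s)X)`. Subdividing it into `n` equal steps and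
using the triangle inequality gives `‖H - K‖₂² ≤ ∑ 4 n² sinh²(xᵢ / 2n)`, where `xᵢ` are the
eigenvalues of `X`, and the right side tends to `∑ xᵢ² = δ²(A, B)`.
-/

open Matrix
open scoped ComplexOrder

section Spectral

/-! ### Unitary diagonalizations and the spectral description of `δ` -/

variable {m : ℕ}

/-- The Hermitian matrix `U diag(d) U*` with real spectrum `d`; it is used with `U` unitary. -/
noncomputable def spec (U : Matrix (Fin m) (Fin m) ℂ) (d : Fin m → ℝ) :
    Matrix (Fin m) (Fin m) ℂ :=
  U * Matrix.diagonal (fun i => (d i : ℂ)) * Uᴴ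

/-- The positive definite matrix `exp (U diag(h) U*) = U diag(exp h) U*`, for `U` unitary. -/
noncomputable def espec (U : Matrix (Fin m) (Fin m) ℂ) (h : Fin m → ℝ) :
    Matrix (Fin m) (Fin m) ℂ :=
  spec U (fun i => Real.exp (h i))

lemma spec_isHermitian (U : Matrix (Fin m) (Fin m) ℂ) (d : Fin m → ℝ) :
    (spec U d).IsHermitian := by
  unfold spec Matrix.IsHermitian
  simp only [conjTranspose_mul, conjTranspose_conjTranspose, diagonal_conjTranspose,
    Matrix.mul_assoc]
  congr 3
  ext i
  simp

lemma spec_mul {U : Matrix (Fin m) (Fin m) ℂ} (hU : Uᴴ * U = 1) (d e : Fin m → ℝ) :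
    spec U d * spec U e = spec U (fun i => d i * e i) := by
  unfold spec
  calc _ = U * diagonal (fun i => (d i : ℂ)) * (Uᴴ * U) * diagonal (fun i => (e i : ℂ)) * Uᴴ := by
        simp only [Matrix.mul_assoc]
    _ = _ := by
        rw [hU, Matrix.mul_one, Matrix.mul_assoc U, diagonal_mul_diagonal]
        simp

lemma spec_one {U : Matrix (Fin m) (Fin m) ℂ} (hU : Uᴴ * U = 1) :
    spec U (fun _ => 1) = 1 := by
  simp [spec, mul_eq_one_comm.mp hU]

lemma espec_mul {U : Matrix (Fin m) (Fin m) ℂ} (hU : Uᴴ * U = 1) (h k : Fin m → ℝ) :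
    espec U h * espec U k = espec U (fun i => h i + k i) := by
  simp only [espec, spec_mul hU, Real.exp_add]

lemma espec_zero {U : Matrix (Fin m) (Fin m) ℂ} (hU : Uᴴ * U = 1) :
    espec U (fun _ => 0) = 1 := by
  simp only [espec, Real.exp_zero, spec_one hU]

lemma espec_mul_neg {U : Matrix (Fin m) (Fin m) ℂ} (hU : Uᴴ * U = 1) (h : Fin m → ℝ) :
    espec U h * espec U (fun i => - h i) = 1 := by
  simp only [espec_mul hU, add_neg_cancel, espec_zero hU]

lemma espec_neg_mul {U : Matrix (Fin m) (Fin m) ℂ} (hU : Uᴴ * U = 1) (h : Fin m → ℝ) :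
    espec U (fun i => - h i) * espec U h = 1 :=
  mul_eq_one_comm.mp (espec_mul_neg hU h)

lemma espec_inv {U : Matrix (Fin m) (Fin m) ℂ} (hU : Uᴴ * U = 1) (h : Fin m → ℝ) :
    (espec U h)⁻¹ = espec U (fun i => - h i) :=
  inv_eq_right_inv (espec_mul_neg hU h)

lemma espec_posDef {U : Matrix (Fin m) (Fin m) ℂ} (hU : Uᴴ * U = 1) (h : Fin m → ℝ) :
    (espec U h).PosDef := by
  have hd : (diagonal (fun i => ((Real.exp (h i) : ℝ) : ℂ))).PosDef :=
    PosDef.diagonal (fun i => by exact_mod_cast Real.exp_pos _)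
  refine hd.mul_mul_conjTranspose_same ?_
  rw [Matrix.vecMul_injective_iff_isUnit]
  exact IsUnit.of_mul_eq_one _ (mul_eq_one_comm.mp hU)

/-- Functional calculus may be computed in any unitary diagonalization. -/
lemma matFun_spec (f : ℝ → ℝ) {U : Matrix (Fin m) (Fin m) ℂ} (hU : Uᴴ * U = 1)
    (d : Fin m → ℝ) : matFun f (spec U d) = spec U (fun i => f (d i)) := by
  have hA := spec_isHermitian U d
  unfold matFun
  rw [dif_pos hA]
  set V : Matrix (Fin m) (Fin m) ℂ := (hA.eigenvectorUnitary : Matrix (Fin m) (Fin m) ℂ) with hVdef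
  set e := hA.eigenvalues
  have hV : Vᴴ * V = 1 := Unitary.coe_star_mul_self hA.eigenvectorUnitary
  have hUU := mul_eq_one_comm.mp hU
  have hVV := mul_eq_one_comm.mp hV
  have hs : spec U d = V * diagonal (fun i => (e i : ℂ)) * Vᴴ := by
    conv_lhs => rw [hA.spectral_theorem]
    rfl
  -- `V* U` intertwines the two diagonal matrices, so it only links equal eigenvalues.
  have key : Vᴴ * U * diagonal (fun i => (d i : ℂ)) = diagonal (fun i => (e i : ℂ)) * (Vᴴ * U) := by
    have h1 : Vᴴ * spec U d * U = Vᴴ * U * diagonal (fun i => (d i : ℂ)) := by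
      unfold spec
      calc _ = Vᴴ * U * diagonal (fun i => (d i : ℂ)) * (Uᴴ * U) := by simp only [Matrix.mul_assoc]
        _ = _ := by rw [hU, Matrix.mul_one]
    rw [← h1, hs]
    calc _ = (Vᴴ * V) * diagonal (fun i => (e i : ℂ)) * (Vᴴ * U) := by simp only [Matrix.mul_assoc]
      _ = _ := by rw [hV, Matrix.one_mul]
  have key2 : Vᴴ * U * diagonal (fun i => (f (d i) : ℂ)) =
      diagonal (fun i => (f (e i) : ℂ)) * (Vᴴ * U) := by
    ext i j
    have := congrFun (congrFun key i) j
    rw [mul_diagonal, diagonal_mul] at this ⊢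
    by_cases hw : (Vᴴ * U) i j = 0
    · simp [hw]
    · have h2 : (d j : ℂ) = e i := mul_left_cancel₀ hw (by rw [this]; ring)
      have h3 : d j = e i := by exact_mod_cast h2
      rw [h3]; ring
  change V * diagonal (fun i => (f (e i) : ℂ)) * Vᴴ = _
  unfold spec
  calc _ = V * (diagonal (fun i => (f (e i) : ℂ)) * (Vᴴ * U)) * Uᴴ := by
        simp only [Matrix.mul_assoc, hUU, Matrix.mul_one]
    _ = (V * Vᴴ) * U * diagonal (fun i => (f (d i) : ℂ)) * Uᴴ := by
        rw [← key2]; simp only [Matrix.mul_assoc]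
    _ = _ := by rw [hVV, Matrix.one_mul]

lemma mlog_espec {U : Matrix (Fin m) (Fin m) ℂ} (hU : Uᴴ * U = 1) (h : Fin m → ℝ) :
    mlog (espec U h) = spec U h := by
  simp only [mlog, espec, matFun_spec _ hU, Real.log_exp]

lemma msqrt_espec {U : Matrix (Fin m) (Fin m) ℂ} (hU : Uᴴ * U = 1) (h : Fin m → ℝ) :
    msqrt (espec U h) = espec U (fun i => h i / 2) := by
  simp only [msqrt, espec, matFun_spec _ hU, Real.exp_half]

lemma exists_espec {A : Matrix (Fin m) (Fin m) ℂ} (hA : A.PosDef) :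
    ∃ (U : Matrix (Fin m) (Fin m) ℂ) (h : Fin m → ℝ), Uᴴ * U = 1 ∧ A = espec U h := by
  refine ⟨hA.1.eigenvectorUnitary, fun i => Real.log (hA.1.eigenvalues i),
    Unitary.coe_star_mul_self hA.1.eigenvectorUnitary, ?_⟩
  simp only [espec, Real.exp_log (hA.eigenvalues_pos _)]
  conv_lhs => rw [hA.1.spectral_theorem]
  rfl

/-- The trace form on two diagonalized matrices: the weights `|(U* V)ᵢⱼ|²` depend
only on the eigenbases, not on the spectra. -/
lemma trace_spec_mul_spec (U V : Matrix (Fin m) (Fin m) ℂ) (a b : Fin m → ℝ) :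
    (spec U a * spec V b).trace.re =
      ∑ i, ∑ j, Complex.normSq ((Uᴴ * V) i j) * (a i * b j) := by
  have h1 : (spec U a * spec V b).trace =
      (diagonal (fun i => (a i : ℂ)) * (Uᴴ * V) * (diagonal (fun i => (b i : ℂ)) * (Uᴴ * V)ᴴ)).trace := by
    unfold spec
    rw [Matrix.mul_assoc U, Matrix.mul_assoc U, trace_mul_comm U]
    simp only [Matrix.mul_assoc, conjTranspose_mul, conjTranspose_conjTranspose]
  rw [h1]
  simp only [trace, diag_apply, Matrix.mul_apply (M := diagonal _ * _), diagonal_mul,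
    conjTranspose_apply, Complex.re_sum]
  refine Finset.sum_congr rfl fun i _ => Finset.sum_congr rfl fun j _ => ?_
  simp [Complex.normSq_apply]
  ring

lemma fnorm_sq_of_isHermitian {X : Matrix (Fin m) (Fin m) ℂ} (hX : X.IsHermitian) :
    fnorm X ^ 2 = (X * X).trace.re := by
  have h : 0 ≤ (Xᴴ * X).trace.re :=
    (Complex.le_def.mp (posSemidef_conjTranspose_mul_self X).trace_nonneg).1
  rw [fnorm, Real.sq_sqrt h, hX.eq]

lemma trace_spec {U : Matrix (Fin m) (Fin m) ℂ} (hU : Uᴴ * U = 1) (d : Fin m → ℝ) :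
    (spec U d).trace.re = ∑ i, d i := by
  unfold spec
  rw [trace_mul_comm, ← Matrix.mul_assoc, hU, Matrix.one_mul, trace_diagonal]
  simp

lemma fnorm_sq_spec {U : Matrix (Fin m) (Fin m) ℂ} (hU : Uᴴ * U = 1) (d : Fin m → ℝ) :
    fnorm (spec U d) ^ 2 = ∑ i, d i ^ 2 := by
  rw [fnorm_sq_of_isHermitian (spec_isHermitian U d), spec_mul hU, trace_spec hU]
  simp only [pow_two]

lemma charpoly_conj {R S : Matrix (Fin m) (Fin m) ℂ} (h : R * S = 1)
    (X : Matrix (Fin m) (Fin m) ℂ) : (S * X * R).charpoly = X.charpoly := by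
  rw [charpoly_mul_comm, ← Matrix.mul_assoc, h, Matrix.one_mul]

lemma fnorm_sq_mlog {Y : Matrix (Fin m) (Fin m) ℂ} (hY : Y.IsHermitian) :
    fnorm (mlog Y) ^ 2 = ∑ i, Real.log (hY.eigenvalues i) ^ 2 := by
  have hV : (hY.eigenvectorUnitary : Matrix (Fin m) (Fin m) ℂ)ᴴ * hY.eigenvectorUnitary = 1 :=
    Unitary.coe_star_mul_self hY.eigenvectorUnitary
  have h : mlog Y = spec (hY.eigenvectorUnitary : Matrix (Fin m) (Fin m) ℂ)
      (fun i => Real.log (hY.eigenvalues i)) := by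
    rw [mlog, matFun, dif_pos hY]
    rfl
  rw [h, fnorm_sq_spec hV]

/-- `δ²(A, B)` is a function of the spectrum of `A⁻¹ B` alone. -/
lemma rdist_sq_of_charpoly {A B : Matrix (Fin m) (Fin m) ℂ} (hA : A.PosDef) (hB : B.PosDef)
    {U : Matrix (Fin m) (Fin m) ℂ} (hU : Uᴴ * U = 1) (x : Fin m → ℝ)
    (h : (A⁻¹ * B).charpoly = (espec U x).charpoly) :
    rdist A B ^ 2 = ∑ i, x i ^ 2 := by
  obtain ⟨V, a, hV, rfl⟩ := exists_espec hA
  unfold rdist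
  rw [msqrt_espec hV, espec_inv hV]
  rw [espec_inv hV] at h
  set R := espec V (fun i => - (a i / 2)) with hR
  have hRh : Rᴴ = R := spec_isHermitian _ _
  have hRR : R * R = espec V (fun i => - a i) := by
    rw [hR, espec_mul hV]; congr 1; ext i; ring
  have hRinv : R * espec V (fun i => a i / 2) = 1 := espec_neg_mul hV _
  have hZ : (R * B * R).PosDef := by
    have := hB.mul_mul_conjTranspose_same (B := R) (by
      rw [Matrix.vecMul_injective_iff_isUnit]
      exact IsUnit.of_mul_eq_one _ hRinv)
    rwa [hRh] at this
  have hch : (R * B * R).charpoly = (espec U x).charpoly := by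
    rw [← h, charpoly_mul_comm, ← Matrix.mul_assoc, hRR]
  have hE := (espec_posDef hU x).1
  have hev := (hZ.1.eigenvalues_eq_eigenvalues_iff hE).mpr hch
  rw [fnorm_sq_mlog hZ.1, hev, ← fnorm_sq_mlog hE, mlog_espec hU, fnorm_sq_spec hU]

lemma posDef_congr {A T S : Matrix (Fin m) (Fin m) ℂ} (hA : A.PosDef) (hT : T * S = 1) :
    (T * A * Tᴴ).PosDef :=
  hA.mul_mul_conjTranspose_same (by
    rw [Matrix.vecMul_injective_iff_isUnit]
    exact IsUnit.of_mul_eq_one _ hT)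

/-- `A⁻¹ B` is similar to the positive definite matrix `A^{-1/2} B A^{-1/2}`. -/
lemma exists_charpoly {A B : Matrix (Fin m) (Fin m) ℂ} (hA : A.PosDef) (hB : B.PosDef) :
    ∃ (U : Matrix (Fin m) (Fin m) ℂ) (x : Fin m → ℝ), Uᴴ * U = 1 ∧
      (A⁻¹ * B).charpoly = (espec U x).charpoly := by
  obtain ⟨V, a, hV, rfl⟩ := exists_espec hA
  set R := espec V (fun i => - (a i / 2)) with hR
  have hRh : Rᴴ = R := spec_isHermitian _ _
  have hRR : R * R = espec V (fun i => - a i) := by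
    rw [hR, espec_mul hV]; congr 1; ext i; ring
  obtain ⟨U, x, hU, h⟩ := exists_espec (posDef_congr hB (espec_neg_mul hV (fun i => a i / 2)))
  refine ⟨U, x, hU, ?_⟩
  rw [← h, ← hR, hRh, charpoly_mul_comm (R * B) R, ← Matrix.mul_assoc, hRR, espec_inv hV]

lemma rdist_sq_congr {A B T S : Matrix (Fin m) (Fin m) ℂ} (hA : A.PosDef) (hB : B.PosDef)
    (hT : T * S = 1) : rdist (T * A * Tᴴ) (T * B * Tᴴ) ^ 2 = rdist A B ^ 2 := by
  obtain ⟨U, x, hU, h⟩ := exists_charpoly hA hB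
  rw [rdist_sq_of_charpoly hA hB hU x h]
  refine rdist_sq_of_charpoly (posDef_congr hA hT) (posDef_congr hB hT) hU x ?_
  have hS : S * T = 1 := mul_eq_one_comm.mp hT
  have hTh : Tᴴ * Sᴴ = 1 := by rw [← conjTranspose_mul, hS, conjTranspose_one]
  have hAu : A * A⁻¹ = 1 := mul_nonsing_inv _ (hA.isUnit.map detMonoidHom)
  have hinv : (T * A * Tᴴ)⁻¹ = Sᴴ * A⁻¹ * S := by
    apply inv_eq_right_inv
    calc _ = T * A * (Tᴴ * Sᴴ) * A⁻¹ * S := by simp only [Matrix.mul_assoc]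
      _ = 1 := by rw [hTh, Matrix.mul_one, Matrix.mul_assoc T, hAu, Matrix.mul_one, hT]
  rw [hinv, ← h, ← charpoly_conj hTh (A⁻¹ * B)]
  congr 1
  calc _ = Sᴴ * A⁻¹ * (S * T) * B * Tᴴ := by simp only [Matrix.mul_assoc]
    _ = _ := by rw [hS, Matrix.mul_one]; simp only [Matrix.mul_assoc]

/-! ### The exponential metric increasing property -/

lemma sq_le_exp_add_exp_neg (x : ℝ) : x ^ 2 ≤ Real.exp x + Real.exp (-x) - 2 := by
  have h1 : Real.exp x + Real.exp (-x) - 2 = (2 * Real.sinh (x / 2)) ^ 2 := by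
    have e1 : Real.exp x = Real.exp (x / 2) ^ 2 := by rw [← Real.exp_nat_mul]; congr 1; push_cast; ring
    have e2 : Real.exp (-x) = Real.exp (-(x / 2)) ^ 2 := by
      rw [← Real.exp_nat_mul]; congr 1; push_cast; ring
    have e3 : Real.exp (x / 2) * Real.exp (-(x / 2)) = 1 := by rw [← Real.exp_add]; simp
    rw [Real.sinh_eq, e1, e2]
    linear_combination 2 * e3
  rw [h1]
  apply sq_le_sq.mpr
  rw [abs_mul, Real.abs_sinh]
  have := Real.self_le_sinh_iff.mpr (abs_nonneg (x / 2))
  rw [abs_div, abs_two] at this ⊢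
  linarith

/-- A derivative-free form of the infinitesimal inequality: since
`‖H - K‖₂² = ∑ wᵢⱼ (hᵢ - kⱼ)²` and `tr(A⁻¹B + B⁻¹A - 2) = ∑ wᵢⱼ 4 sinh²((hᵢ - kⱼ)/2)` with the same
weights `wᵢⱼ`, where `A = exp H` and `B = exp K`, the comparison holds term by term. -/
lemma fnorm_mlog_sub_sq_le_trace {A B : Matrix (Fin m) (Fin m) ℂ} (hA : A.PosDef)
    (hB : B.PosDef) :
    fnorm (mlog A - mlog B) ^ 2 ≤ (A⁻¹ * B).trace.re + (A * B⁻¹).trace.re - 2 * m := by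
  obtain ⟨U, h, hU, rfl⟩ := exists_espec hA
  obtain ⟨V, k, hV, rfl⟩ := exists_espec hB
  rw [mlog_espec hU, mlog_espec hV, espec_inv hU, espec_inv hV,
    fnorm_sq_of_isHermitian ((spec_isHermitian U h).sub (spec_isHermitian V k))]
  have e1 : ((spec U h - spec V k) * (spec U h - spec V k)).trace.re =
      (spec U (fun i => h i * h i) * spec V (fun _ => 1)).trace.re
      + (spec U (fun _ => 1) * spec V (fun i => k i * k i)).trace.re
      - 2 * (spec U h * spec V k).trace.re := by
    rw [spec_one hU, spec_one hV, ← spec_mul hU, ← spec_mul hV]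
    simp only [Matrix.mul_sub, Matrix.sub_mul, trace_sub, Matrix.mul_one, Matrix.one_mul,
      Complex.sub_re]
    rw [trace_mul_comm (spec V k) (spec U h)]
    ring
  have e2 : (2 * m : ℝ) = 2 * (spec U (fun _ => 1) * spec V (fun _ => 1)).trace.re := by
    rw [spec_one hU, spec_one hV]
    simp
  rw [e1, e2]
  unfold espec
  simp only [trace_spec_mul_spec, Finset.mul_sum, ← Finset.sum_add_distrib,
    ← Finset.sum_sub_distrib]
  refine Finset.sum_le_sum fun i _ => Finset.sum_le_sum fun j _ => ?_
  have hx := sq_le_exp_add_exp_neg (h i - k j)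
  have hw := Complex.normSq_nonneg ((Uᴴ * V) i j)
  have h1 : Real.exp (h i - k j) = Real.exp (h i) * Real.exp (-k j) := by
    rw [← Real.exp_add, sub_eq_add_neg]
  have h2 : Real.exp (-(h i - k j)) = Real.exp (-h i) * Real.exp (k j) := by
    rw [← Real.exp_add]; congr 1; ring
  rw [h1, h2] at hx
  linarith [mul_le_mul_of_nonneg_left hx hw]

/-- `4 n² sinh²(x / 2n) → x²`, with the index shifted to avoid `n = 0`. -/
lemma tendsto_sq_mul_exp (x : ℝ) :
    Filter.Tendsto (fun n : ℕ => ((n : ℝ) + 1) ^ 2 *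
      (Real.exp (x / (n + 1)) + Real.exp (-(x / (n + 1))) - 2)) Filter.atTop (nhds (x ^ 2)) := by
  have hd : HasDerivAt (fun t : ℝ => Real.exp (t * x / 2) - Real.exp (-(t * x / 2))) x 0 := by
    have h0 : HasDerivAt (fun t : ℝ => t * x / 2) (x / 2) 0 := by
      simpa using ((hasDerivAt_id (0 : ℝ)).mul_const x).div_const 2
    exact (h0.exp.sub h0.neg.exp).congr_deriv (by simp)
  have hu : Filter.Tendsto (fun n : ℕ => 1 / ((n : ℝ) + 1)) Filter.atTop (nhdsWithin 0 {0}ᶜ) := by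
    refine tendsto_nhdsWithin_iff.mpr ⟨tendsto_one_div_add_atTop_nhds_zero_nat, ?_⟩
    refine Filter.Eventually.of_forall fun n => ?_
    have : (n : ℝ) + 1 ≠ 0 := by positivity
    simpa using this
  refine ((hd.tendsto_slope_zero.comp hu).pow 2).congr fun n => ?_
  have hn : (n : ℝ) + 1 ≠ 0 := by positivity
  have e1 : Real.exp (x / (n + 1)) = Real.exp (1 / ((n : ℝ) + 1) * x / 2) ^ 2 := by
    rw [← Real.exp_nat_mul]; congr 1; push_cast; ring
  have e2 : Real.exp (-(x / (n + 1))) = Real.exp (-(1 / ((n : ℝ) + 1) * x / 2)) ^ 2 := by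
    rw [← Real.exp_nat_mul]; congr 1; push_cast; ring
  have e3 : Real.exp (1 / ((n : ℝ) + 1) * x / 2) * Real.exp (-(1 / ((n : ℝ) + 1) * x / 2)) = 1 := by
    rw [← Real.exp_add]; simp
  rw [e1, e2]
  simp only [Function.comp, zero_add, zero_mul, zero_div, neg_zero, sub_self, sub_zero, smul_eq_mul,
    one_div, inv_inv] at e3 ⊢
  linear_combination (-2 * ((n : ℝ) + 1) ^ 2) * e3

section Frobenius

attribute [local instance] Matrix.frobeniusNormedAddCommGroup

lemma fnorm_eq_norm (X : Matrix (Fin m) (Fin m) ℂ) : fnorm X = ‖X‖ := by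
  rw [frobenius_norm_def, fnorm, Real.sqrt_eq_rpow, Finset.sum_comm]
  congr 1
  simp only [trace, diag_apply, Matrix.mul_apply, conjTranspose_apply, Complex.re_sum]
  refine Finset.sum_congr rfl fun i _ => Finset.sum_congr rfl fun j _ => ?_
  rw [Real.rpow_two, ← Complex.normSq_eq_norm_sq, Complex.normSq_apply]
  simp

lemma fnorm_sub_le_mul (L : ℕ → Matrix (Fin m) (Fin m) ℂ) (c : ℝ) (n : ℕ)
    (h : ∀ k, fnorm (L k - L (k + 1)) ≤ c) : fnorm (L 0 - L n) ≤ n * c := by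
  rw [fnorm_eq_norm, ← dist_eq_norm]
  refine (dist_le_range_sum_dist L n).trans ?_
  refine (Finset.sum_le_card_nsmul _ _ c fun k _ => ?_).trans (by simp)
  rw [dist_eq_norm, ← fnorm_eq_norm]
  exact h k

end Frobenius

/-- The exponential metric increasing property: `‖log A - log B‖₂ ≤ δ(A, B)`. The geodesic from
`A` to `B` is cut into `n + 1` equal pieces, the trace bound is applied to each piece, and
`n → ∞`. -/
lemma fnorm_mlog_sub_sq_le_rdist_sq {A B : Matrix (Fin m) (Fin m) ℂ} (hA : A.PosDef)
    (hB : B.PosDef) : fnorm (mlog A - mlog B) ^ 2 ≤ rdist A B ^ 2 := by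
  obtain ⟨V, a, hV, rfl⟩ := exists_espec hA
  set R := espec V (fun i => - (a i / 2)) with hR
  set P := espec V (fun i => a i / 2) with hP
  have hRh : Rᴴ = R := spec_isHermitian _ _
  have hPh : Pᴴ = P := spec_isHermitian _ _
  have hPP : P * P = espec V a := by
    rw [hP, espec_mul hV]; congr 1; ext i; ring
  have hPR : P * R = 1 := espec_mul_neg hV _
  have hRP : R * P = 1 := espec_neg_mul hV _
  obtain ⟨U, x, hU, h⟩ := exists_espec (posDef_congr hB hRP)
  -- The geodesic `t ↦ P exp(tX) P` from `A` to `B`.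
  let γ : ℝ → Matrix (Fin m) (Fin m) ℂ := fun t => P * espec U (fun i => t * x i) * Pᴴ
  have hγ : ∀ t, (γ t).PosDef := fun t => posDef_congr (espec_posDef hU _) hPR
  have hγ0 : γ 0 = espec V a := by
    simp only [γ, zero_mul, espec_zero hU, Matrix.mul_one, hPh, hPP]
  have hγ1 : γ 1 = B := by
    simp only [γ, one_mul]
    change P * espec U x * Pᴴ = B
    rw [← h, hRh, hPh]
    calc _ = (P * R) * B * (R * P) := by simp only [Matrix.mul_assoc]
      _ = B := by rw [hPR, hRP, Matrix.one_mul, Matrix.mul_one]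
  have hinv : ∀ t, (γ t)⁻¹ = R * espec U (fun i => - (t * x i)) * R := by
    intro t
    apply inv_eq_right_inv
    simp only [γ, hPh]
    calc _ = P * (espec U (fun i => t * x i) * ((P * R) * espec U (fun i => - (t * x i)))) * R := by
          simp only [Matrix.mul_assoc]
      _ = 1 := by rw [hPR, Matrix.one_mul, espec_mul_neg hU, Matrix.mul_one, hPR]
  have htr1 : ∀ s t, ((γ s)⁻¹ * γ t).trace.re = ∑ i, Real.exp ((t - s) * x i) := by
    intro s t
    rw [hinv]
    simp only [γ, hPh]
    have : R * espec U (fun i => - (s * x i)) * R * (P * espec U (fun i => t * x i) * P) =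
        R * (espec U (fun i => - (s * x i)) * (R * P) * espec U (fun i => t * x i) * P) := by
      simp only [Matrix.mul_assoc]
    rw [this, trace_mul_comm, Matrix.mul_assoc _ P R, hPR, hRP, Matrix.mul_one, Matrix.mul_one,
      espec_mul hU, espec, trace_spec hU]
    refine Finset.sum_congr rfl fun i _ => ?_
    congr 1; ring
  have hstep : ∀ s t, fnorm (mlog (γ s) - mlog (γ t)) ^ 2 ≤
      ∑ i, (Real.exp ((t - s) * x i) + Real.exp (-((t - s) * x i)) - 2) := by
    intro s t
    refine (fnorm_mlog_sub_sq_le_trace (hγ s) (hγ t)).trans (le_of_eq ?_)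
    rw [trace_mul_comm (γ s), htr1, htr1, Finset.sum_sub_distrib, Finset.sum_add_distrib]
    have e : ∀ i, (s - t) * x i = -((t - s) * x i) := fun i => by ring
    simp only [e, Finset.sum_const, Finset.card_univ, Fintype.card_fin, nsmul_eq_mul]
    ring
  have hn : ∀ n : ℕ, fnorm (mlog (espec V a) - mlog B) ^ 2 ≤ ∑ i, ((n : ℝ) + 1) ^ 2 *
      (Real.exp (x i / (n + 1)) + Real.exp (-(x i / (n + 1))) - 2) := by
    intro n
    have hn0 : (n : ℝ) + 1 ≠ 0 := by positivity
    set q := ∑ i, (Real.exp (x i / (n + 1)) + Real.exp (-(x i / (n + 1))) - 2) with hq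
    have hq0 : 0 ≤ q := Finset.sum_nonneg fun i _ =>
      (sq_nonneg _).trans (sq_le_exp_add_exp_neg _)
    have := fnorm_sub_le_mul (fun k => mlog (γ ((k : ℝ) / (n + 1)))) (Real.sqrt q) (n + 1) (by
      intro k
      apply Real.le_sqrt_of_sq_le
      refine (hstep _ _).trans (le_of_eq ?_)
      have e : ∀ i, (((k + 1 : ℕ) : ℝ) / (n + 1) - (k : ℝ) / (n + 1)) * x i = x i / (n + 1) := by
        intro i; push_cast; field_simp; ring
      simp only [e, hq])
    simp only [Nat.cast_zero, zero_div, Nat.cast_add, Nat.cast_one, div_self hn0, hγ0, hγ1] at this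
    rw [← Finset.mul_sum, ← hq, ← Real.sq_sqrt hq0, ← mul_pow]
    exact pow_le_pow_left₀ (Real.sqrt_nonneg _) this 2
  have hd : rdist (espec V a) B ^ 2 = ∑ i, x i ^ 2 := by
    refine rdist_sq_of_charpoly hA hB hU x ?_
    rw [← h, ← hγ0, hinv, hRh, charpoly_mul_comm (R * B) R, ← Matrix.mul_assoc]
    simp only [zero_mul, neg_zero, espec_zero hU, Matrix.mul_one]
  rw [hd]
  exact ge_of_tendsto' (tendsto_finsetSum _ fun i _ => tendsto_sq_mul_exp (x i)) hn

/-! ### The semiparallelogram law -/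

lemma fnorm_parallelogram {X Y : Matrix (Fin m) (Fin m) ℂ} (hX : X.IsHermitian)
    (hY : Y.IsHermitian) :
    fnorm (X - Y) ^ 2 + fnorm (X + Y) ^ 2 = 2 * fnorm X ^ 2 + 2 * fnorm Y ^ 2 := by
  rw [fnorm_sq_of_isHermitian (hX.sub hY), fnorm_sq_of_isHermitian (hX.add hY),
    fnorm_sq_of_isHermitian hX, fnorm_sq_of_isHermitian hY]
  simp only [Matrix.mul_sub, Matrix.sub_mul, Matrix.mul_add, Matrix.add_mul, trace_sub, trace_add,
    Complex.sub_re, Complex.add_re]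
  ring

lemma neg_spec (U : Matrix (Fin m) (Fin m) ℂ) (d : Fin m → ℝ) :
    spec U (fun i => - d i) = - spec U d := by
  unfold spec
  have : diagonal (fun i => ((-d i : ℝ) : ℂ)) = - diagonal (fun i => (d i : ℂ)) := by
    rw [diagonal_neg]; simp
  rw [this, Matrix.mul_neg, Matrix.neg_mul]

/-- The semiparallelogram law when the midpoint is `1`, so that the endpoints are `exp (-K)` and
`exp K`. -/
lemma semiparallelogram_one {C U : Matrix (Fin m) (Fin m) ℂ} (hC : C.PosDef) (hU : Uᴴ * U = 1)
    (k : Fin m → ℝ) :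
    rdist (espec U (fun i => - k i)) (espec U k) ^ 2 + 4 * rdist C 1 ^ 2 ≤
      2 * rdist C (espec U (fun i => - k i)) ^ 2 + 2 * rdist C (espec U k) ^ 2 := by
  have h1 : rdist (espec U (fun i => - k i)) (espec U k) ^ 2 = 4 * fnorm (spec U k) ^ 2 := by
    rw [rdist_sq_of_charpoly (espec_posDef hU _) (espec_posDef hU k) hU (fun i => k i + k i) (by
      rw [espec_inv hU, espec_mul hU]; simp only [neg_neg]), fnorm_sq_spec hU, Finset.mul_sum]
    exact Finset.sum_congr rfl fun i _ => by ring
  have h2 : rdist C 1 ^ 2 = fnorm (mlog C) ^ 2 := by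
    obtain ⟨V, c, hV, rfl⟩ := exists_espec hC
    rw [rdist_sq_of_charpoly hC Matrix.PosDef.one hV (fun i => - c i) (by
      rw [espec_inv hV, Matrix.mul_one]), mlog_espec hV, fnorm_sq_spec hV]
    simp only [neg_sq]
  have h3 := fnorm_mlog_sub_sq_le_rdist_sq hC (espec_posDef hU k)
  have h4 := fnorm_mlog_sub_sq_le_rdist_sq hC (espec_posDef hU (fun i => - k i))
  rw [mlog_espec hU] at h3 h4
  rw [neg_spec, sub_neg_eq_add] at h4
  have hL : (mlog C).IsHermitian := by
    obtain ⟨V, c, hV, rfl⟩ := exists_espec hC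
    rw [mlog_espec hV]
    exact spec_isHermitian _ _
  have h5 := fnorm_parallelogram hL (spec_isHermitian U k)
  rw [h1, h2]
  linarith

end Spectral

/-- The semiparallelogram law for `δ` with midpoint `M = A # B`:
`δ²(A,B) + 4δ²(C,M) ≤ 2δ²(C,A) + 2δ²(C,B)`. -/
theorem rdist_semiparallelogram {m : ℕ} (A B C : Matrix (Fin m) (Fin m) ℂ)
    (hA : A.PosDef) (hB : B.PosDef) (hC : C.PosDef) :
    rdist A B ^ 2 + 4 * rdist C (gmean A B) ^ 2 ≤
      2 * rdist C A ^ 2 + 2 * rdist C B ^ 2 := by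
  -- With `A = P²` and `P⁻¹ B P⁻¹ = exp X`, the congruence by `T = P exp(X/4)` carries
  -- `exp (-X/2)`, `exp (X/2)` and `1` to `A`, `B` and `A # B`.
  obtain ⟨V, a, hV, rfl⟩ := exists_espec hA
  have hgm : gmean (espec V a) B = espec V (fun i => a i / 2) *
      msqrt (espec V (fun i => - (a i / 2)) * B * espec V (fun i => - (a i / 2))) *
      espec V (fun i => a i / 2) := by
    rw [gmean, msqrt_espec hV, espec_inv hV]
  set R := espec V (fun i => - (a i / 2)) with hR
  set P := espec V (fun i => a i / 2) with hP
  have hRh : Rᴴ = R := spec_isHermitian _ _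
  have hPh : Pᴴ = P := spec_isHermitian _ _
  have hPP : P * P = espec V a := by
    rw [hP, espec_mul hV]; congr 1; ext i; ring
  have hPR : P * R = 1 := espec_mul_neg hV _
  have hRP : R * P = 1 := espec_neg_mul hV _
  obtain ⟨U, x, hU, h⟩ := exists_espec (posDef_congr hB hRP)
  rw [hRh] at h
  rw [h, msqrt_espec hU] at hgm
  set Q := espec U (fun i => x i / 4) with hQ
  have hQh : Qᴴ = Q := spec_isHermitian _ _
  set Q' := espec U (fun i => - (x i / 4)) with hQ'
  have hQQ' : Q * Q' = 1 := espec_mul_neg hU _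
  have hT : (P * Q) * (Q' * R) = 1 := by
    calc _ = P * (Q * Q') * R := by simp only [Matrix.mul_assoc]
      _ = 1 := by rw [hQQ', Matrix.mul_one, hPR]
  have hS : (Q' * R) * (P * Q) = 1 := mul_eq_one_comm.mp hT
  have hconj : ∀ y : Fin m → ℝ, P * Q * espec U y * (P * Q)ᴴ =
      P * espec U (fun i => y i + x i / 2) * P := by
    intro y
    rw [conjTranspose_mul, hPh, hQh]
    calc _ = P * (Q * espec U y * Q) * P := by simp only [Matrix.mul_assoc]
      _ = _ := by
        rw [hQ, espec_mul hU, espec_mul hU]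
        congr 3; ext i; ring
  have eA : P * Q * espec U (fun i => - (x i / 2)) * (P * Q)ᴴ = espec V a := by
    rw [hconj]
    simp only [neg_add_cancel, espec_zero hU, Matrix.mul_one, hPP]
  have eB : P * Q * espec U (fun i => x i / 2) * (P * Q)ᴴ = B := by
    rw [hconj]
    simp only [add_halves]
    change P * espec U x * P = B
    rw [← h]
    calc _ = (P * R) * B * (R * P) := by simp only [Matrix.mul_assoc]
      _ = B := by rw [hPR, hRP, Matrix.one_mul, Matrix.mul_one]
  have eM : P * Q * 1 * (P * Q)ᴴ = gmean (espec V a) B := by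
    rw [← espec_zero hU, hconj, hgm]
    simp only [zero_add]
  have hC' := posDef_congr hC hS
  have eC : P * Q * ((Q' * R) * C * (Q' * R)ᴴ) * (P * Q)ᴴ = C := by
    calc _ = ((P * Q) * (Q' * R)) * C * ((P * Q) * (Q' * R))ᴴ := by
          rw [conjTranspose_mul (P * Q)]; simp only [Matrix.mul_assoc]
      _ = C := by rw [hT, conjTranspose_one, Matrix.one_mul, Matrix.mul_one]
  have main := semiparallelogram_one hC' hU (fun i => x i / 2)
  have p1 := espec_posDef hU (fun i => - (x i / 2))
  have p2 := espec_posDef hU (fun i => x i / 2)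
  rw [← rdist_sq_congr p1 p2 hT, ← rdist_sq_congr hC' Matrix.PosDef.one hT,
    ← rdist_sq_congr hC' p1 hT, ← rdist_sq_congr hC' p2 hT, eA, eB, eM, eC] at main
  exact main
end

section
/- Let A and B be m×m positive definite complex matrices. The map α : [0,1] → 𝓟 defined by α(t) = A #_t B satisfies δ(α(s), α(t)) = |t − s| · δ(A,B) for all s, t ∈ [0,1]; i.e., after reparametrization by arc length it is an isometry onto the geodesic arc from A to B, with α(0) = A and α(1) = B. -/
/-!
Write `S = A^{1/2}` and `C = S⁻¹ B S⁻¹`, so that `α(t) = S C^t S`. The value `δ(X, Y)` is the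
`ℓ²` norm of the logarithms of the eigenvalues of `X^{-1/2} Y X^{-1/2}`, hence depends only on the
characteristic polynomial of that matrix, which is also the characteristic polynomial of `Y X⁻¹`
(`charpoly_inv_conj`). For `X = α(s)` and `Y = α(t)` one has `Y X⁻¹ = S C^{t-s} S⁻¹`, whose
characteristic polynomial is that of `C^{t-s}`. The eigenvalues of the latter are `c_i^{t-s}`, where
`c_i > 0` are those of `C` (`charpoly_matFun`), and `log (c_i^{t-s}) = (t - s) log c_i`
(`fnorm_matFun_of_charpoly` turns this into the statement about norms).
-/

open Matrix
open scoped ComplexOrder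

section Helpers

variable {m : ℕ} {A B : Matrix (Fin m) (Fin m) ℂ}

lemma matFun_eq (hA : A.IsHermitian) (f : ℝ → ℝ) :
    matFun f A = (hA.eigenvectorUnitary : Matrix (Fin m) (Fin m) ℂ) *
      Matrix.diagonal (fun i => (f (hA.eigenvalues i) : ℂ)) *
      (star (hA.eigenvectorUnitary : Matrix (Fin m) (Fin m) ℂ)) := by
  rw [matFun, dif_pos hA]

lemma matFun_mul (hA : A.IsHermitian) (f g : ℝ → ℝ) :
    matFun f A * matFun g A = matFun (fun x => f x * g x) A := by
  simp only [matFun_eq hA]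
  have h := Unitary.coe_star_mul_self hA.eigenvectorUnitary
  set U := (hA.eigenvectorUnitary : Matrix (Fin m) (Fin m) ℂ)
  calc _ = U * diagonal (fun i => (f (hA.eigenvalues i) : ℂ)) * (star U * U) *
        diagonal (fun i => (g (hA.eigenvalues i) : ℂ)) * star U := by simp only [mul_assoc]
    _ = _ := by
      rw [h, mul_one, mul_assoc U, diagonal_mul_diagonal]
      simp

lemma matFun_congr (hA : A.IsHermitian) {f g : ℝ → ℝ}
    (h : ∀ i, f (hA.eigenvalues i) = g (hA.eigenvalues i)) : matFun f A = matFun g A := by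
  simp only [matFun_eq hA, h]

lemma matFun_id (hA : A.IsHermitian) : matFun (fun x => x) A = A := by
  rw [matFun_eq hA]
  conv_rhs => rw [hA.spectral_theorem]
  rfl

lemma matFun_one (hA : A.IsHermitian) : matFun (fun _ => 1) A = 1 := by
  rw [matFun_eq hA]
  simp

lemma posDef_matFun (hA : A.IsHermitian) {f : ℝ → ℝ} (h : ∀ i, 0 < f (hA.eigenvalues i)) :
    (matFun f A).PosDef := by
  rw [matFun_eq hA]
  have hU : IsUnit (hA.eigenvectorUnitary : Matrix (Fin m) (Fin m) ℂ) :=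
    (Unitary.toUnits hA.eigenvectorUnitary).isUnit
  rw [hU.posDef_star_right_conjugate_iff, posDef_diagonal_iff]
  intro i
  exact_mod_cast h i

open Polynomial in
/-- Spectral mapping, with multiplicities. -/
lemma charpoly_matFun (hA : A.IsHermitian) (f : ℝ → ℝ) :
    (matFun f A).charpoly = ∏ i, (X - C ((f (hA.eigenvalues i) : ℝ) : ℂ)) := by
  rw [matFun_eq hA, charpoly_mul_comm, ← mul_assoc]
  simp [charpoly_diagonal]

lemma fnorm_matFun (hA : A.IsHermitian) (f : ℝ → ℝ) :
    fnorm (matFun f A) = √(∑ i, f (hA.eigenvalues i) ^ 2) := by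
  have hH : (matFun f A)ᴴ = matFun f A := by
    rw [matFun_eq hA]
    simp [← star_eq_conjTranspose, mul_assoc, star_mul]
    simp [star_eq_conjTranspose, diagonal_conjTranspose, Pi.star_def]
  rw [fnorm, hH, matFun_mul hA, matFun_eq hA, trace_mul_comm, ← mul_assoc]
  simp [trace_diagonal, sq]

open Polynomial in
/-- The Frobenius norm of `f(A)` can be computed from any listing `d` of the roots of the
characteristic polynomial of the Hermitian matrix `A`. -/
lemma fnorm_matFun_of_charpoly (hA : A.IsHermitian) (f : ℝ → ℝ) (d : Fin m → ℝ)
    (h : A.charpoly = ∏ i, (X - C (d i : ℂ))) :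
    fnorm (matFun f A) = √(∑ i, f (d i) ^ 2) := by
  rw [fnorm_matFun hA]
  have h1 := hA.roots_charpoly_eq_eigenvalues
  have h2 : A.charpoly.roots = Multiset.map (fun i => (d i : ℂ)) Finset.univ.val := by
    have h4 := Polynomial.roots_multiset_prod_X_sub_C
      (Multiset.map (fun i => (d i : ℂ)) Finset.univ.val)
    rw [Multiset.map_map] at h4
    rw [h]
    exact h4
  rw [h1] at h2
  -- Both listings give the same multiset of roots; sum `f(·)²` over it.
  have h3 := congrArg (fun s => (s.map (fun z : ℂ => f z.re ^ 2)).sum) h2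
  simp only [Multiset.map_map, Function.comp_def] at h3
  congr 1

lemma posDef_msqrt (hA : A.PosDef) : (msqrt A).PosDef :=
  posDef_matFun hA.isHermitian fun i => Real.sqrt_pos.2 (hA.eigenvalues_pos i)

lemma msqrt_mul_msqrt (hA : A.PosDef) : msqrt A * msqrt A = A := by
  rw [msqrt, matFun_mul hA.isHermitian]
  conv_rhs => rw [← matFun_id hA.isHermitian]
  exact matFun_congr _ fun i => Real.mul_self_sqrt (hA.eigenvalues_pos i).le

lemma posDef_mpow (hA : A.PosDef) (t : ℝ) : (mpow A t).PosDef :=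
  posDef_matFun hA.isHermitian fun i => Real.rpow_pos_of_pos (hA.eigenvalues_pos i) t

lemma mpow_mul_mpow (hA : A.PosDef) (s t : ℝ) : mpow A s * mpow A t = mpow A (s + t) := by
  rw [mpow, mpow, matFun_mul hA.isHermitian]
  exact matFun_congr hA.isHermitian fun i => (Real.rpow_add (hA.eigenvalues_pos i) s t).symm

lemma mpow_zero (hA : A.PosDef) : mpow A 0 = 1 := by
  rw [← matFun_one hA.isHermitian, mpow]
  exact matFun_congr hA.isHermitian fun i => Real.rpow_zero _

lemma mpow_one (hA : A.PosDef) : mpow A 1 = A := by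
  conv_rhs => rw [← matFun_id hA.isHermitian]
  exact matFun_congr hA.isHermitian fun i => Real.rpow_one _

lemma inv_mpow (hA : A.PosDef) (s : ℝ) : (mpow A s)⁻¹ = mpow A (-s) :=
  Matrix.inv_eq_right_inv (by rw [mpow_mul_mpow hA, add_neg_cancel, mpow_zero hA])

/-- Congruence by a positive definite (hence invertible and self-adjoint) `S`. -/
lemma posDef_conj {S : Matrix (Fin m) (Fin m) ℂ} (hS : S.PosDef) (hB : B.PosDef) :
    (S * B * S).PosDef := by
  have h := (hS.isUnit.posDef_star_right_conjugate_iff (x := B)).2 hB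
  rwa [star_eq_conjTranspose, hS.isHermitian.eq] at h

lemma charpoly_inv_conj (hA : A.PosDef) :
    ((msqrt A)⁻¹ * B * (msqrt A)⁻¹).charpoly = (B * A⁻¹).charpoly := by
  conv_rhs => rw [← msqrt_mul_msqrt hA]
  rw [Matrix.mul_inv_rev, mul_assoc, charpoly_mul_comm, mul_assoc]

end Helpers

/-- The curve `α(t) = A #_t B` satisfies `δ(α(s), α(t)) = |t - s| ⬝ δ(A,B)`, with
`α(0) = A` and `α(1) = B`; i.e., it is (after reparametrization by arc length) an isometry
onto the geodesic arc from `A` to `B`. -/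
theorem wgmean_geodesic {m : ℕ} (A B : Matrix (Fin m) (Fin m) ℂ)
    (hA : A.PosDef) (hB : B.PosDef) :
    (∀ s t : ℝ, s ∈ Set.Icc (0 : ℝ) 1 → t ∈ Set.Icc (0 : ℝ) 1 →
      rdist (wgmean A B s) (wgmean A B t) = |t - s| * rdist A B) ∧
    wgmean A B 0 = A ∧ wgmean A B 1 = B := by
  have hS := posDef_msqrt hA
  have hSu : IsUnit (msqrt A).det := (Matrix.isUnit_iff_isUnit_det _).1 hS.isUnit
  have hC : ((msqrt A)⁻¹ * B * (msqrt A)⁻¹).PosDef := posDef_conj hS.inv hB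
  refine ⟨fun s t _ _ => ?_, ?_, ?_⟩
  · have hX : (wgmean A B s).PosDef := posDef_conj hS (posDef_mpow hC s)
    have hY : (wgmean A B t).PosDef := posDef_conj hS (posDef_mpow hC t)
    have hH := (posDef_conj (posDef_msqrt hX).inv hY).isHermitian
    have hYX : wgmean A B t * (wgmean A B s)⁻¹ =
        msqrt A * (mpow ((msqrt A)⁻¹ * B * (msqrt A)⁻¹) (t - s) * (msqrt A)⁻¹) := by
      simp only [wgmean]
      rw [Matrix.mul_inv_rev, Matrix.mul_inv_rev, inv_mpow hC, sub_eq_add_neg,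
        ← mpow_mul_mpow hC]
      simp only [mul_assoc]
      rw [Matrix.mul_nonsing_inv_cancel_left _ _ hSu]
    have hchar := charpoly_inv_conj (B := wgmean A B t) hX
    rw [hYX, charpoly_mul_comm (msqrt A),
      mul_assoc (mpow _ _), Matrix.nonsing_inv_mul _ hSu, mul_one, mpow,
      charpoly_matFun hC.isHermitian] at hchar
    rw [rdist, rdist, mlog, mlog, fnorm_matFun_of_charpoly hH _ _ hchar,
      fnorm_matFun hC.isHermitian, ← Real.sqrt_sq_eq_abs, ← Real.sqrt_mul (sq_nonneg _),
      Finset.mul_sum]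
    congr 1
    refine Finset.sum_congr rfl fun i _ => ?_
    rw [Real.log_rpow (hC.eigenvalues_pos i), mul_pow]
  · rw [wgmean, mpow_zero hC, mul_one, msqrt_mul_msqrt hA]
  · rw [wgmean, mpow_one hC]
    simp only [mul_assoc]
    rw [Matrix.nonsing_inv_mul _ hSu, mul_one, Matrix.mul_nonsing_inv_cancel_left _ _ hSu]
end
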